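/- arXiv:1007.4621 — 2 statements merged into one kernel-verified Lean document; each statement's English description precedes it below -/
import Mathlib

section
/- For every prime power q, one has h(2) < 10/q. -/
/-!
Write `x = |P|⁻¹ ≤ 1/2`. Since `|y| ≤ |sinh y|`, taking `y = (log t) / 2` gives
`(log t)² ≤ (t - 1)² / t`, and the cases `t = 1 ± x` add up to
`u_P² + v_P² ≤ 2x² / (1 - x²) ≤ (8/3) x²`.
There are `q ^ d` monic polynomials of degree `d`, so `∑ |P|⁻²` over all of them is the geometric
series `∑ q⁻ᵈ`. Discarding `P = 1` leaves `1 / (q - 1)`, whence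
`h(2) ≤ (8/3) / (q - 1) < 10 / q`.
-/

open Polynomial

/-- `u_P = -log(1 - |P|⁻¹)` where `|P| = q^(deg P)`. -/
noncomputable def uP {Fq : Type} [Field Fq] [Fintype Fq] (P : Polynomial Fq) : ℝ :=
  -Real.log (1 - ((Fintype.card Fq : ℝ) ^ P.natDegree)⁻¹)

/-- `v_P = log(1 + |P|⁻¹)` where `|P| = q^(deg P)`. -/
noncomputable def vP {Fq : Type} [Field Fq] [Fintype Fq] (P : Polynomial Fq) : ℝ :=
  Real.log (1 + ((Fintype.card Fq : ℝ) ^ P.natDegree)⁻¹)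

/-- `h(λ) = ∑_P (u_P^λ + (-1)^λ v_P^λ)`, the sum over all monic irreducible
polynomials `P ∈ Fq[X]`. -/
noncomputable def hfun (Fq : Type) [Field Fq] [Fintype Fq] (l : ℕ) : ℝ :=
  ∑' P : {P : Polynomial Fq // P.Monic ∧ Irreducible P},
    (uP P.1 ^ l + (-1 : ℝ) ^ l * vP P.1 ^ l)

section LogEstimates

lemma sq_le_sinh_sq (y : ℝ) : y ^ 2 ≤ Real.sinh y ^ 2 := by
  rw [sq_le_sq, Real.abs_sinh]
  exact Real.self_le_sinh_iff.2 (abs_nonneg y)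

lemma log_sq_le_sub_one_sq_div {t : ℝ} (ht : 0 < t) : Real.log t ^ 2 ≤ (t - 1) ^ 2 / t := by
  have hs : 0 < √t := Real.sqrt_pos.2 ht
  have hst : √t ^ 2 = t := Real.sq_sqrt ht.le
  calc Real.log t ^ 2 = 4 * Real.log √t ^ 2 := by rw [Real.log_sqrt ht.le]; ring
    _ ≤ 4 * Real.sinh (Real.log √t) ^ 2 := by gcongr 4 * ?_; exact sq_le_sinh_sq _
    _ = (√t ^ 2 - 1) ^ 2 / √t ^ 2 := by rw [Real.sinh_log hs]; field_simp; ring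
    _ = (t - 1) ^ 2 / t := by rw [hst]

lemma log_one_sub_sq_add_log_one_add_sq_le {x : ℝ} (hx : |x| < 1) :
    Real.log (1 - x) ^ 2 + Real.log (1 + x) ^ 2 ≤ 2 * x ^ 2 / (1 - x ^ 2) := by
  obtain ⟨hx₁, hx₂⟩ := abs_lt.1 hx
  have hsub : 0 < 1 - x := by linarith
  have hadd : 0 < 1 + x := by linarith
  calc Real.log (1 - x) ^ 2 + Real.log (1 + x) ^ 2
      ≤ (1 - x - 1) ^ 2 / (1 - x) + (1 + x - 1) ^ 2 / (1 + x) :=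
        add_le_add (log_sq_le_sub_one_sq_div hsub) (log_sq_le_sub_one_sq_div hadd)
    _ = 2 * x ^ 2 / (1 - x ^ 2) := by
        rw [show 1 - x ^ 2 = (1 - x) * (1 + x) by ring]
        field_simp
        ring

end LogEstimates

section MonicPolynomials

variable {R : Type*} [Ring R] [Nontrivial R]

lemma natCard_monic_natDegree_eq (d : ℕ) :
    Nat.card {P : R[X] // P.Monic ∧ P.natDegree = d} = Nat.card R ^ d := by
  rw [Nat.card_congr ((monicEquivDegreeLT d).trans (degreeLTEquiv R d).toEquiv), Nat.card_fun,
    Nat.card_fin]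

variable [Finite R]

lemma hasSum_pow_natDegree_monic_fiber {A : Type*} [Semiring A] [TopologicalSpace A] (x : A)
    (d : ℕ) :
    HasSum (fun P : {P : {P : R[X] // P.Monic} // P.1.natDegree = d} ↦ x ^ P.1.1.natDegree)
      ((Nat.card R * x) ^ d) := by
  let e := Equiv.subtypeSubtypeEquivSubtypeInter (fun P : R[X] ↦ P.Monic) (·.natDegree = d)
  have hcard := (Nat.card_congr e).trans (natCard_monic_natDegree_eq d)
  have : Finite {P : {P : R[X] // P.Monic} // P.1.natDegree = d} :=
    Nat.finite_of_card_ne_zero (hcard ▸ pow_ne_zero d Nat.card_pos.ne')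
  have := Fintype.ofFinite {P : {P : R[X] // P.Monic} // P.1.natDegree = d}
  convert hasSum_fintype _ using 1
  rw [Finset.sum_congr rfl fun P _ ↦ congrArg (x ^ ·) P.2, Finset.sum_const, Finset.card_univ,
    ← Nat.card_eq_fintype_card, hcard, nsmul_eq_mul, (Nat.cast_commute _ x).mul_pow, Nat.cast_pow]

lemma summable_pow_natDegree_monic {x : ℝ} (hx₀ : 0 ≤ x) (hx : Nat.card R * x < 1) :
    Summable fun P : {P : R[X] // P.Monic} ↦ x ^ P.1.natDegree := by
  rw [← (Equiv.sigmaFiberEquiv fun P : {P : R[X] // P.Monic} ↦ P.1.natDegree).summable_iff]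
  refine (summable_sigma_of_nonneg fun _ ↦ pow_nonneg hx₀ _).2
    ⟨fun d ↦ (hasSum_pow_natDegree_monic_fiber x d).summable, ?_⟩
  refine (summable_geometric_of_lt_one (by positivity) hx).congr fun d ↦ ?_
  exact (hasSum_pow_natDegree_monic_fiber x d).tsum_eq.symm

lemma hasSum_pow_natDegree_monic {𝕜 : Type*} [NormedDivisionRing 𝕜] [CompleteSpace 𝕜] {x : 𝕜}
    (hx : Nat.card R * ‖x‖ < 1) :
    HasSum (fun P : {P : R[X] // P.Monic} ↦ x ^ P.1.natDegree) (1 - Nat.card R * x)⁻¹ := by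
  let e := Equiv.sigmaFiberEquiv fun P : {P : R[X] // P.Monic} ↦ P.1.natDegree
  have hsummable : Summable fun P : {P : R[X] // P.Monic} ↦ x ^ P.1.natDegree := by
    refine Summable.of_norm ?_
    simpa only [norm_pow] using summable_pow_natDegree_monic (norm_nonneg x) hx
  have hnorm : ‖(Nat.card R * x : 𝕜)‖ < 1 := by
    refine lt_of_le_of_lt ?_ hx
    rw [norm_mul]
    gcongr
    simpa using Nat.norm_cast_le (α := 𝕜) (Nat.card R)
  rw [← e.hasSum_iff]
  exact (hasSum_geometric_of_norm_lt_one hnorm).sigma_of_hasSum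
    (hasSum_pow_natDegree_monic_fiber x) (e.summable_iff.2 hsummable)

lemma summable_pow_natDegree_monic_irreducible {x : ℝ} (hx₀ : 0 ≤ x) (hx : Nat.card R * x < 1) :
    Summable fun P : {P : R[X] // P.Monic ∧ Irreducible P} ↦ x ^ P.1.natDegree :=
  (summable_pow_natDegree_monic hx₀ hx).comp_injective
    (i := Subtype.map id fun _ ↦ And.left) (Subtype.map_injective _ Function.injective_id)

lemma tsum_pow_natDegree_monic_irreducible_le {x : ℝ} (hx₀ : 0 ≤ x) (hx : Nat.card R * x < 1) :
    ∑' P : {P : R[X] // P.Monic ∧ Irreducible P}, x ^ P.1.natDegree ≤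
      (1 - Nat.card R * x)⁻¹ - 1 := by
  classical
  let one : {P : R[X] // P.Monic} := ⟨1, monic_one⟩
  let ι : {P : R[X] // P.Monic ∧ Irreducible P} → {P : R[X] // P.Monic} :=
    Subtype.map id fun _ ↦ And.left
  have hι (P) : ι P ≠ one := fun h ↦ P.2.2.ne_one (congrArg Subtype.val h)
  have hone : x ^ one.1.natDegree = 1 := by rw [natDegree_one, pow_zero]
  have hmonic := hasSum_pow_natDegree_monic (R := R) (x := x) (by rwa [Real.norm_of_nonneg hx₀])
  have hne_one : HasSum (fun P ↦ if P = one then 0 else x ^ P.1.natDegree)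
      ((1 - Nat.card R * x)⁻¹ - 1) := by
    simpa only [hone] using hasSum_ite_sub_hasSum hmonic one
  have hnonneg (P : {P : R[X] // P.Monic}) : 0 ≤ if P = one then 0 else x ^ P.1.natDegree := by
    split_ifs
    exacts [le_rfl, pow_nonneg hx₀ _]
  exact hasSum_le_inj ι (Subtype.map_injective _ Function.injective_id) (fun P _ ↦ hnonneg P)
    (fun P ↦ (if_neg (hι P)).ge) (summable_pow_natDegree_monic_irreducible hx₀ hx).hasSum hne_one

end MonicPolynomials

section PrimeSums

variable {Fq : Type} [Field Fq] [Fintype Fq]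

lemma uP_sq_add_vP_sq_le {P : Fq[X]} (hP : P.natDegree ≠ 0) :
    uP P ^ 2 + vP P ^ 2 ≤ 8 / 3 * (((Fintype.card Fq : ℝ) ^ 2)⁻¹) ^ P.natDegree := by
  set x : ℝ := ((Fintype.card Fq : ℝ) ^ P.natDegree)⁻¹ with hx
  have hq : (2 : ℝ) ≤ Fintype.card Fq := by exact_mod_cast Fintype.one_lt_card (α := Fq)
  have hx₀ : 0 ≤ x := by positivity
  have hx₁ : x ≤ 2⁻¹ :=
    inv_anti₀ two_pos (hq.trans (le_self_pow₀ (one_le_two.trans hq) hP))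
  have hx₂ : x ^ 2 ≤ 1 / 4 := by nlinarith
  calc uP P ^ 2 + vP P ^ 2 = Real.log (1 - x) ^ 2 + Real.log (1 + x) ^ 2 := by
        rw [uP, vP, neg_sq]
    _ ≤ 2 * x ^ 2 / (1 - x ^ 2) :=
        log_one_sub_sq_add_log_one_add_sq_le (by rw [abs_of_nonneg hx₀]; linarith)
    _ ≤ 8 / 3 * x ^ 2 := by
        rw [div_le_iff₀ (by linarith)]
        nlinarith [sq_nonneg x]
    _ = 8 / 3 * (((Fintype.card Fq : ℝ) ^ 2)⁻¹) ^ P.natDegree := by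
        rw [hx, inv_pow, inv_pow, pow_right_comm]

lemma hfun_two_le : hfun Fq 2 ≤ 8 / 3 * ((Fintype.card Fq : ℝ) - 1)⁻¹ := by
  set q : ℝ := (Fintype.card Fq : ℝ) with hq_def
  have hq : 1 < q := Nat.one_lt_cast.2 Fintype.one_lt_card
  have hcard : (Nat.card Fq : ℝ) * (q ^ 2)⁻¹ = q⁻¹ := by
    rw [Nat.card_eq_fintype_card, ← hq_def]
    field_simp
  have hlt : (Nat.card Fq : ℝ) * (q ^ 2)⁻¹ < 1 := hcard ▸ inv_lt_one_of_one_lt₀ hq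
  have hsummable := (summable_pow_natDegree_monic_irreducible (by positivity) hlt).mul_left (8 / 3)
  have hterm (P : {P : Fq[X] // P.Monic ∧ Irreducible P}) :
      uP P.1 ^ 2 + (-1) ^ 2 * vP P.1 ^ 2 ≤ 8 / 3 * ((q ^ 2)⁻¹) ^ P.1.natDegree := by
    rw [neg_one_sq, one_mul]
    exact uP_sq_add_vP_sq_le P.2.2.natDegree_pos.ne'
  calc hfun Fq 2
      ≤ ∑' P : {P : Fq[X] // P.Monic ∧ Irreducible P}, 8 / 3 * ((q ^ 2)⁻¹) ^ P.1.natDegree :=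
        (hsummable.of_nonneg_of_le (fun P ↦ by positivity) hterm).tsum_le_tsum hterm hsummable
    _ ≤ 8 / 3 * ((1 - Nat.card Fq * (q ^ 2)⁻¹)⁻¹ - 1) := by
        rw [tsum_mul_left]
        gcongr
        exact tsum_pow_natDegree_monic_irreducible_le (by positivity) hlt
    _ = 8 / 3 * (q - 1)⁻¹ := by
        have : q - 1 ≠ 0 := (sub_pos.2 hq).ne'
        rw [hcard]
        field_simp
        ring

end PrimeSums

/-- For every prime power `q` (realized as the cardinality of a finite field `Fq`),
one has `h(2) < 10/q`. -/
theorem hfun_two_lt (Fq : Type) [Field Fq] [Fintype Fq] :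
    hfun Fq 2 < 10 / (Fintype.card Fq : ℝ) := by
  have hq : (2 : ℝ) ≤ Fintype.card Fq := by exact_mod_cast Fintype.one_lt_card (α := Fq)
  calc hfun Fq 2 ≤ 8 / 3 * ((Fintype.card Fq : ℝ) - 1)⁻¹ := hfun_two_le
    _ < 10 / (Fintype.card Fq : ℝ) := by
        rw [← div_eq_mul_inv, div_lt_div_iff₀ (by linarith) (by linarith)]
        linarith
end

section
/- Let q be a prime power and let λ_1, …, λ_r be positive integers with λ_1 + ⋯ + λ_r = s. Then ∏_{i=1}^{r} h(λ_i) ≤ h(2)^{s/2}. -/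
open Polynomial

/-!
Since `h(λ) ≥ 0` and `∑ λᵢ = s`, it suffices to show `h(λ) ≤ h(2)^(λ/2)` for each `λ ≥ 1`.

For `λ ≥ 2` this is the monotonicity of `ℓᵖ` norms:
`u^λ + v^λ ≤ (u² + v²)^(λ/2)` for each `P`, and `∑ gᵖ ≤ (∑ g)ᵖ` for `p = λ/2 ≥ 1`.

For `λ = 1` the terms are `u_P - v_P = -log(1 - |P|⁻²)`, so `h(1)` is the logarithm of the Euler
product of the zeta function `∑_f |f|⁻² = 1 / (1 - q⁻¹)` of `𝔽_q[X]`. Hence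
`h(1) ≤ -log(1 - q⁻¹) = u_X`, and `u_X²` is part of the term of `h(2)` at `P = X`.
-/

section Sieve

variable {M A : Type*} [CommMonoidWithZero M] [IsLeftCancelMulZero M]
  [CommRing A] [TopologicalSpace A] [IsTopologicalRing A] {w : M → A} {a : A}

theorem hasSum_indicator_not_dvd {b : A} (hw : HasSum w a) {p : M} (hp : p ≠ 0)
    (hmul : ∀ m, w (p * m) = b * w m) :
    HasSum ({m | ¬ p ∣ m}.indicator w) ((1 - b) * a) := by
  have hsupport : ∀ m ∉ Set.range (p * ·), {m | p ∣ m}.indicator w m = 0 := fun m hm =>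
    Set.indicator_of_notMem (s := {m | p ∣ m}) (fun ⟨k, hk⟩ => hm ⟨k, hk.symm⟩) w
  have hmultiples : HasSum ({m | p ∣ m}.indicator w) (b * a) := by
    rw [← (mul_right_injective₀ hp).hasSum_iff hsupport]
    simpa [Function.comp_def, hmul] using hw.mul_left b
  have hcompl : {m | ¬ p ∣ m}.indicator w = fun m => w m - {m | p ∣ m}.indicator w m :=
    Set.indicator_compl {m | p ∣ m} w
  rw [hcompl, one_sub_mul]
  exact hw.sub hmultiples

/-- Sieving out the primes of `S` one at a time removes their Euler factors from the sum. -/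
theorem hasSum_indicator_forall_not_dvd (hw : HasSum w a) {S : Finset M}
    (hprime : ∀ p ∈ S, Prime p) (hdvd : ∀ p ∈ S, ∀ r ∈ S, p ∣ r → p = r)
    (hmul : ∀ p ∈ S, ∀ m, w (p * m) = w p * w m) :
    HasSum ({m | ∀ p ∈ S, ¬ p ∣ m}.indicator w) ((∏ p ∈ S, (1 - w p)) * a) := by
  classical
  induction S using Finset.induction_on with
  | empty => simpa using hw
  | insert p S hpS ih =>
    simp only [Finset.forall_mem_insert] at hprime hmul
    have hsieved := ih hprime.2 (fun r hr t ht =>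
      hdvd r (Finset.mem_insert_of_mem hr) t (Finset.mem_insert_of_mem ht)) hmul.2
    have hcoprime (m : M) : (∀ r ∈ S, ¬ r ∣ p * m) ↔ ∀ r ∈ S, ¬ r ∣ m := by
      refine forall₂_congr fun r hr => not_congr ⟨fun h => ?_, fun h => h.mul_left p⟩
      refine ((hprime.2 r hr).dvd_or_dvd h).resolve_left fun hrp => hpS ?_
      rwa [← hdvd r (Finset.mem_insert_of_mem hr) p (Finset.mem_insert_self p S) hrp]
    have hstep := hasSum_indicator_not_dvd hsieved hprime.1.ne_zero (b := w p) fun m => by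
      simp [Set.indicator_apply, hcoprime, hmul.1]
    rw [Set.indicator_indicator, ← mul_assoc] at hstep
    simpa only [Finset.prod_insert hpS, Finset.forall_mem_insert, Set.ofPred_and] using hstep

end Sieve

section EulerProduct

theorem card_monic_natDegree_eq (R : Type*) [Ring R] [Nontrivial R] (n : ℕ) :
    Nat.card {f : R[X] // f.Monic ∧ f.natDegree = n} = Nat.card R ^ n := by
  rw [Nat.card_congr ((monicEquivDegreeLT n).trans (degreeLTEquiv R n).toEquiv), Nat.card_fun,
    Nat.card_fin]

/-- At `x = q⁻ˢ` this sum is the zeta function of `R[X]`. -/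
theorem hasSum_indicator_monic_pow_natDegree (R : Type*) [Ring R] [Nontrivial R] [Fintype R]
    {x : ℝ} (hx : 0 ≤ x) (hx1 : Fintype.card R * x < 1) :
    HasSum ({f : R[X] | f.Monic}.indicator fun f => x ^ f.natDegree)
      (1 - Fintype.card R * x)⁻¹ := by
  let Fiber (n : ℕ) := {f : {f : R[X] // f.Monic} // f.1.natDegree = n}
  have hcard (n : ℕ) : Nat.card (Fiber n) = Fintype.card R ^ n := by
    rw [← Nat.card_eq_fintype_card, ← card_monic_natDegree_eq]
    exact Nat.card_congr (Equiv.subtypeSubtypeEquivSubtypeInter Monic fun f => f.natDegree = n)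
  have hdegree (n : ℕ) :
      HasSum (fun f : Fiber n => x ^ f.1.1.natDegree) ((Fintype.card R * x) ^ n) := by
    have : Finite (Fiber n) :=
      Nat.finite_of_card_ne_zero (hcard n ▸ (pow_pos Fintype.card_pos n).ne')
    have := Fintype.ofFinite (Fiber n)
    convert hasSum_fintype _ using 1
    rw [Finset.sum_congr rfl fun f _ => by rw [f.2], Finset.sum_const, Finset.card_univ,
      ← Nat.card_eq_fintype_card (α := Fiber n), hcard, nsmul_eq_mul, mul_pow, Nat.cast_pow]
  have hgeom := hasSum_geometric_of_lt_one (by positivity) hx1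
  refine hasSum_subtype_iff_indicator.1 ((Equiv.sigmaFiberEquiv
    fun f : {f : R[X] // f.Monic} => f.1.natDegree).hasSum_iff.1 ?_)
  refine HasSum.sigma_of_hasSum hgeom hdegree ((summable_sigma_of_nonneg ?_).2 ⟨?_, ?_⟩)
  · exact fun f => pow_nonneg hx _
  · exact fun n => (hdegree n).summable
  · exact hgeom.summable.congr fun n => (hdegree n).tsum_eq.symm

/-- The index set of the sums over monic irreducible polynomials, as it appears in `hfun`. -/
abbrev MonicIrreducible (F : Type*) [Semiring F] :=
  {P : F[X] // P.Monic ∧ Irreducible P}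

variable {F : Type*} [Field F] [Fintype F] {x : ℝ}

theorem summable_pow_natDegree_monicIrreducible (hx : 0 ≤ x) (hx1 : Fintype.card F * x < 1) :
    Summable fun P : MonicIrreducible F => x ^ P.1.natDegree := by
  refine ((hasSum_indicator_monic_pow_natDegree F hx hx1).summable.comp_injective
    Subtype.val_injective).congr fun P => ?_
  simp [P.2.1]

theorem one_sub_card_mul_le_prod_one_sub_pow_natDegree (hx : 0 ≤ x)
    (hx1 : Fintype.card F * x < 1) (S : Finset (MonicIrreducible F)) :
    1 - Fintype.card F * x ≤ ∏ P ∈ S, (1 - x ^ P.1.natDegree) := by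
  set w : F[X] → ℝ := {f : F[X] | f.Monic}.indicator fun f => x ^ f.natDegree with hw
  have hw_nonneg (f : F[X]) : 0 ≤ w f := Set.indicator_nonneg (fun f _ => by positivity) f
  have hw_mul (P : F[X]) (hP : P.Monic) (f : F[X]) : w (P * f) = w P * w f := by
    by_cases hf : f.Monic
    · simp [hw, hP, hf, hP.mul hf, hP.natDegree_mul hf, pow_add]
    · simp [hw, hf, mt hP.of_mul_monic_left hf]
  have hsieved := hasSum_indicator_forall_not_dvd
    (hasSum_indicator_monic_pow_natDegree F hx hx1) (S := S.map (.subtype _))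
    (by simpa using fun P _ hP _ => hP.prime)
    (by simpa using fun P hP hPi _ Q hQ hQi _ hdvd =>
      eq_of_monic_of_associated hP hQ (hPi.associated_of_dvd hQi hdvd))
    (by simpa using fun P hP _ _ => hw_mul P hP)
  have hone : w 1 ≤ (∏ P ∈ S.map (.subtype _), (1 - w P)) * (1 - Fintype.card F * x)⁻¹ := by
    refine le_trans (Set.indicator_of_mem ?_ w).ge
      (le_hasSum hsieved 1 fun f _ => Set.indicator_nonneg (fun f _ => hw_nonneg f) f)
    simpa using fun P _ hP _ => hP.not_dvd_one
  have hprod : ∏ P ∈ S.map (.subtype _), (1 - w P) = ∏ P ∈ S, (1 - x ^ P.1.natDegree) := by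
    rw [Finset.prod_map]
    exact Finset.prod_congr rfl fun P _ => by simp [hw, P.2.1]
  have hw_one : w 1 = 1 := by simp [hw]
  rwa [hprod, hw_one, ← div_eq_mul_inv, one_le_div (sub_pos.2 hx1)] at hone

theorem tsum_neg_log_one_sub_pow_natDegree_le (hx : 0 ≤ x) (hx1 : Fintype.card F * x < 1) :
    ∑' P : MonicIrreducible F, -Real.log (1 - x ^ P.1.natDegree) ≤
      -Real.log (1 - Fintype.card F * x) := by
  have hx_lt_one : x < 1 := by
    have : (1 : ℝ) ≤ Fintype.card F := by exact_mod_cast Fintype.card_pos (α := F)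
    nlinarith
  have hfactor (P : MonicIrreducible F) : 0 < 1 - x ^ P.1.natDegree :=
    sub_pos.2 (pow_lt_one₀ hx hx_lt_one P.2.2.natDegree_pos.ne')
  refine Real.tsum_le_of_sum_le (fun P => ?_) fun S => ?_
  · exact neg_nonneg.2 (Real.log_nonpos (hfactor P).le (sub_le_self 1 (pow_nonneg hx _)))
  · rw [Finset.sum_neg_distrib, ← Real.log_prod fun P _ => (hfactor P).ne', neg_le_neg_iff]
    exact Real.log_le_log (sub_pos.2 hx1) (one_sub_card_mul_le_prod_one_sub_pow_natDegree hx hx1 S)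

end EulerProduct

section PowerSums

theorem pow_add_pow_le_rpow_sq_add_sq {a b : ℝ} (ha : 0 ≤ a) (hb : 0 ≤ b) {n : ℕ} (hn : 2 ≤ n) :
    a ^ n + b ^ n ≤ (a ^ 2 + b ^ 2) ^ ((n : ℝ) / 2) := by
  have hpow {c : ℝ} (hc : 0 ≤ c) : c ^ n = (c ^ 2) ^ ((n : ℝ) / 2) := by
    rw [Real.rpow_div_two_eq_sqrt _ (sq_nonneg c), Real.sqrt_sq hc, Real.rpow_natCast]
  rw [hpow ha, hpow hb]
  refine Real.add_rpow_le_rpow_add (sq_nonneg a) (sq_nonneg b) ?_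
  rw [one_le_div two_pos]
  exact_mod_cast hn

variable {ι : Type*} {g : ι → ℝ} {p : ℝ}

theorem rpow_le_mul_rpow_tsum (hg : ∀ i, 0 ≤ g i) (hs : Summable g) (hp : 1 ≤ p) (i : ι) :
    g i ^ p ≤ g i * (∑' j, g j) ^ (p - 1) :=
  calc g i ^ p = g i * g i ^ (p - 1) := by
        rw [← Real.rpow_one_add' (hg i) (by linarith), add_sub_cancel]
    _ ≤ g i * (∑' j, g j) ^ (p - 1) :=
        mul_le_mul_of_nonneg_left (Real.rpow_le_rpow (hg i) (hs.le_tsum i fun j _ => hg j)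
          (sub_nonneg.2 hp)) (hg i)

theorem summable_rpow_of_one_le (hg : ∀ i, 0 ≤ g i) (hs : Summable g) (hp : 1 ≤ p) :
    Summable fun i => g i ^ p :=
  (hs.mul_right _).of_nonneg_of_le (fun i => Real.rpow_nonneg (hg i) p)
    (rpow_le_mul_rpow_tsum hg hs hp)

theorem tsum_rpow_le_rpow_tsum (hg : ∀ i, 0 ≤ g i) (hs : Summable g) (hp : 1 ≤ p) :
    ∑' i, g i ^ p ≤ (∑' i, g i) ^ p :=
  calc ∑' i, g i ^ p ≤ ∑' i, g i * (∑' j, g j) ^ (p - 1) :=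
        (summable_rpow_of_one_le hg hs hp).tsum_le_tsum (rpow_le_mul_rpow_tsum hg hs hp)
          (hs.mul_right _)
    _ = (∑' i, g i) ^ p := by
        rw [tsum_mul_right, ← Real.rpow_one_add' (tsum_nonneg hg) (by linarith), add_sub_cancel]

end PowerSums

section LocalTerms

variable {Fq : Type} [Field Fq] [Fintype Fq] {P : Fq[X]}

/-- The inverse norm `|P|⁻¹ = q^(-deg P)`, in terms of which `uP` and `vP` are estimated. -/
noncomputable def invNorm (P : Fq[X]) : ℝ :=
  ((Fintype.card Fq : ℝ) ^ P.natDegree)⁻¹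

theorem invNorm_nonneg (P : Fq[X]) : 0 ≤ invNorm P := by
  unfold invNorm
  positivity

theorem invNorm_le_half (hP : 0 < P.natDegree) : invNorm P ≤ 1 / 2 := by
  have hq : (2 : ℝ) ≤ Fintype.card Fq := by exact_mod_cast Fintype.one_lt_card (α := Fq)
  rw [one_div]
  exact inv_anti₀ two_pos (hq.trans (le_self_pow₀ (by linarith) hP.ne'))

theorem invNorm_sq (P : Fq[X]) :
    invNorm P ^ 2 = ((Fintype.card Fq : ℝ)⁻¹ ^ 2) ^ P.natDegree := by
  rw [invNorm, ← inv_pow, pow_right_comm]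

theorem uP_eq_neg_log (P : Fq[X]) : uP P = -Real.log (1 - invNorm P) := rfl

theorem vP_eq_log (P : Fq[X]) : vP P = Real.log (1 + invNorm P) := rfl

theorem vP_nonneg (P : Fq[X]) : 0 ≤ vP P :=
  Real.log_nonneg (le_add_of_nonneg_right (invNorm_nonneg P))

theorem vP_le_invNorm (P : Fq[X]) : vP P ≤ invNorm P := by
  rw [vP_eq_log]
  linarith [Real.log_le_sub_one_of_pos (x := 1 + invNorm P) (by linarith [invNorm_nonneg P])]

theorem invNorm_le_uP (hP : 0 < P.natDegree) : invNorm P ≤ uP P := by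
  rw [uP_eq_neg_log]
  linarith [Real.log_le_sub_one_of_pos (x := 1 - invNorm P) (by linarith [invNorm_le_half hP])]

theorem vP_le_uP (hP : 0 < P.natDegree) : vP P ≤ uP P :=
  (vP_le_invNorm P).trans (invNorm_le_uP hP)

theorem uP_nonneg (hP : 0 < P.natDegree) : 0 ≤ uP P :=
  (vP_nonneg P).trans (vP_le_uP hP)

theorem uP_le_two_mul_invNorm (hP : 0 < P.natDegree) : uP P ≤ 2 * invNorm P := by
  have hhalf := invNorm_le_half hP
  have hpos : 0 < 1 - invNorm P := by linarith
  calc uP P ≤ (1 - invNorm P)⁻¹ - 1 := by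
        linarith [uP_eq_neg_log P, Real.one_sub_inv_le_log_of_pos hpos]
    _ ≤ 2 * invNorm P := by
        rw [sub_le_iff_le_add, inv_le_iff_one_le_mul₀ hpos]
        nlinarith [invNorm_nonneg P]

theorem uP_sub_vP_eq_neg_log (hP : 0 < P.natDegree) :
    uP P - vP P = -Real.log (1 - invNorm P ^ 2) := by
  have hnonneg := invNorm_nonneg P
  have hhalf := invNorm_le_half hP
  have hfactor : 1 - invNorm P ^ 2 = (1 - invNorm P) * (1 + invNorm P) := by ring
  rw [hfactor, Real.log_mul (by linarith) (by linarith), uP_eq_neg_log, vP_eq_log]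
  ring

theorem uP_X : uP (X : Fq[X]) = -Real.log (1 - (Fintype.card Fq : ℝ)⁻¹) := by
  rw [uP, natDegree_X, pow_one]

theorem uP_sq_add_vP_sq_le_eight_mul_invNorm_sq (hP : 0 < P.natDegree) :
    uP P ^ 2 + vP P ^ 2 ≤ 8 * invNorm P ^ 2 := by
  have hu := pow_le_pow_left₀ (uP_nonneg hP) (uP_le_two_mul_invNorm hP) 2
  have hv := pow_le_pow_left₀ (vP_nonneg P) (vP_le_invNorm P) 2
  nlinarith [sq_nonneg (invNorm P)]

theorem uP_pow_add_neg_one_pow_mul_vP_pow_nonneg (hP : 0 < P.natDegree) (l : ℕ) :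
    0 ≤ uP P ^ l + (-1) ^ l * vP P ^ l := by
  have hle := pow_le_pow_left₀ (vP_nonneg P) (vP_le_uP hP) l
  have hv := pow_nonneg (vP_nonneg P) l
  rcases neg_one_pow_eq_or ℝ l with h | h <;> rw [h] <;> linarith

theorem uP_pow_add_neg_one_pow_mul_vP_pow_le_rpow (hP : 0 < P.natDegree) {l : ℕ} (hl : 2 ≤ l) :
    uP P ^ l + (-1) ^ l * vP P ^ l ≤ (uP P ^ 2 + vP P ^ 2) ^ ((l : ℝ) / 2) := by
  refine le_trans ?_ (pow_add_pow_le_rpow_sq_add_sq (uP_nonneg hP) (vP_nonneg P) hl)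
  have hv := pow_nonneg (vP_nonneg P) l
  rcases neg_one_pow_eq_or ℝ l with h | h <;> rw [h] <;> linarith

end LocalTerms

section HfunBounds

variable (Fq : Type) [Field Fq] [Fintype Fq]

theorem card_mul_inv_card_sq : (Fintype.card Fq : ℝ) * (Fintype.card Fq : ℝ)⁻¹ ^ 2 =
    (Fintype.card Fq : ℝ)⁻¹ := by
  have hq : (Fintype.card Fq : ℝ) ≠ 0 := Nat.cast_ne_zero.2 Fintype.card_ne_zero
  rw [sq, mul_inv_cancel_left₀ hq]

theorem card_mul_inv_card_sq_lt_one : (Fintype.card Fq : ℝ) * (Fintype.card Fq : ℝ)⁻¹ ^ 2 < 1 := by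
  rw [card_mul_inv_card_sq]
  exact inv_lt_one_of_one_lt₀ (by exact_mod_cast Fintype.one_lt_card (α := Fq))

theorem summable_uP_sq_add_vP_sq :
    Summable fun P : MonicIrreducible Fq => uP P.1 ^ 2 + vP P.1 ^ 2 := by
  refine Summable.of_nonneg_of_le (fun P => by positivity)
    (fun P => uP_sq_add_vP_sq_le_eight_mul_invNorm_sq P.2.2.natDegree_pos) (Summable.mul_left 8 ?_)
  simp only [invNorm_sq]
  exact summable_pow_natDegree_monicIrreducible (by positivity) (card_mul_inv_card_sq_lt_one Fq)

theorem hfun_nonneg (l : ℕ) : 0 ≤ hfun Fq l :=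
  tsum_nonneg fun P => uP_pow_add_neg_one_pow_mul_vP_pow_nonneg P.2.2.natDegree_pos l

theorem hfun_two : hfun Fq 2 = ∑' P : MonicIrreducible Fq, (uP P.1 ^ 2 + vP P.1 ^ 2) := by
  simp only [hfun, neg_one_sq, one_mul]

theorem hfun_one_le_uP_X : hfun Fq 1 ≤ uP (X : Fq[X]) :=
  calc hfun Fq 1
      = ∑' P : MonicIrreducible Fq, -Real.log (1 - ((Fintype.card Fq : ℝ)⁻¹ ^ 2) ^ P.1.natDegree) :=
        tsum_congr fun P => by
          rw [← invNorm_sq, ← uP_sub_vP_eq_neg_log P.2.2.natDegree_pos]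
          ring
    _ ≤ -Real.log (1 - Fintype.card Fq * (Fintype.card Fq : ℝ)⁻¹ ^ 2) :=
        tsum_neg_log_one_sub_pow_natDegree_le (by positivity) (card_mul_inv_card_sq_lt_one Fq)
    _ = uP X := by rw [card_mul_inv_card_sq, uP_X]

theorem uP_X_sq_le_hfun_two : uP (X : Fq[X]) ^ 2 ≤ hfun Fq 2 :=
  calc uP (X : Fq[X]) ^ 2 ≤ uP (X : Fq[X]) ^ 2 + vP (X : Fq[X]) ^ 2 :=
        le_add_of_nonneg_right (sq_nonneg _)
    _ ≤ ∑' P : MonicIrreducible Fq, (uP P.1 ^ 2 + vP P.1 ^ 2) :=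
        (summable_uP_sq_add_vP_sq Fq).le_tsum ⟨X, monic_X, irreducible_X⟩
          fun P _ => by positivity
    _ = hfun Fq 2 := (hfun_two Fq).symm

theorem hfun_one_le_sqrt_hfun_two : hfun Fq 1 ≤ √(hfun Fq 2) :=
  (hfun_one_le_uP_X Fq).trans (Real.le_sqrt_of_sq_le (uP_X_sq_le_hfun_two Fq))

theorem hfun_le_rpow_of_two_le {l : ℕ} (hl : 2 ≤ l) : hfun Fq l ≤ hfun Fq 2 ^ ((l : ℝ) / 2) := by
  have hexp : 1 ≤ (l : ℝ) / 2 := by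
    rw [one_le_div two_pos]
    exact_mod_cast hl
  have hsq (P : MonicIrreducible Fq) : 0 ≤ uP P.1 ^ 2 + vP P.1 ^ 2 := by positivity
  have hs := summable_uP_sq_add_vP_sq Fq
  have hrpow := summable_rpow_of_one_le hsq hs hexp
  have hterm (P : MonicIrreducible Fq) :=
    uP_pow_add_neg_one_pow_mul_vP_pow_le_rpow P.2.2.natDegree_pos hl
  have hterm_nonneg (P : MonicIrreducible Fq) :=
    uP_pow_add_neg_one_pow_mul_vP_pow_nonneg P.2.2.natDegree_pos l
  calc hfun Fq l ≤ ∑' P : MonicIrreducible Fq, (uP P.1 ^ 2 + vP P.1 ^ 2) ^ ((l : ℝ) / 2) :=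
        (hrpow.of_nonneg_of_le hterm_nonneg hterm).tsum_le_tsum hterm hrpow
    _ ≤ (∑' P : MonicIrreducible Fq, (uP P.1 ^ 2 + vP P.1 ^ 2)) ^ ((l : ℝ) / 2) :=
        tsum_rpow_le_rpow_tsum hsq hs hexp
    _ = hfun Fq 2 ^ ((l : ℝ) / 2) := by rw [hfun_two]

theorem hfun_le_rpow {l : ℕ} (hl : 0 < l) : hfun Fq l ≤ hfun Fq 2 ^ ((l : ℝ) / 2) := by
  rcases (Nat.succ_le_of_lt hl).eq_or_lt with rfl | htwo
  · simpa [Real.sqrt_eq_rpow] using hfun_one_le_sqrt_hfun_two Fq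
  · exact hfun_le_rpow_of_two_le Fq htwo

end HfunBounds

/-- Let `q` be a prime power (realized as the cardinality of a finite field `Fq`) and let
`λ₁, …, λᵣ` be positive integers with `λ₁ + ⋯ + λᵣ = s`.  Then
`∏ i, h(λᵢ) ≤ h(2)^(s/2)` (real power). -/
theorem hfun_prod_le (Fq : Type) [Field Fq] [Fintype Fq] (r : ℕ) (lam : Fin r → ℕ)
    (hlam : ∀ i, 0 < lam i) (s : ℕ) (hsum : ∑ i, lam i = s) :
    ∏ i, hfun Fq (lam i) ≤ hfun Fq 2 ^ ((s : ℝ) / 2) := by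
  calc ∏ i, hfun Fq (lam i)
      ≤ ∏ i, hfun Fq 2 ^ ((lam i : ℝ) / 2) :=
        Finset.prod_le_prod (fun i _ => hfun_nonneg Fq (lam i)) fun i _ => hfun_le_rpow Fq (hlam i)
    _ = hfun Fq 2 ^ ∑ i, (lam i : ℝ) / 2 :=
        (Real.rpow_sum_of_nonneg (hfun_nonneg Fq 2) fun i _ => by positivity).symm
    _ = hfun Fq 2 ^ ((s : ℝ) / 2) := by rw [← Finset.sum_div, ← Nat.cast_sum, hsum]
end
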